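/- Let C_∞ be a d-dimensional extreme-value copula, let u, v ∈ [0,1]^d and let 0 < a ≤ c. Then γ(v,u,c,a) admits the following closed form: (i) if C_∞(v^{a/c} ∧ u) = C_∞(v^{a/c}) C_∞(u) then γ(v,u,c,a) = 0; (ii) if C_∞(v^{a/c} ∧ u) = 0 ≠ C_∞(v^{a/c}) C_∞(u) then γ(v,u,c,a) = −(c+a) C_∞(v) C_∞(u); (iii) otherwise (i.e. if C_∞(v^{a/c} ∧ u) > 0 and C_∞(v^{a/c} ∧ u) ≠ C_∞(v^{a/c}) C_∞(u)), γ(v,u,c,a) = C_∞(v^{1−a/c}) · [ 2a · (C_∞(v^{a/c} ∧ u) − C_∞(v^{a/c}) C_∞(u)) / (ln C_∞(v^{a/c} ∧ u) − ln(C_∞(v^{a/c}) C_∞(u))) + (c−a) C_∞(v^{a/c} ∧ u) − (c+a) C_∞(v^{a/c}) C_∞(u) ]. -/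

import Mathlib

/-! Max-stability rewrites everything in terms of the three numbers `A = C (u^{1/a})`,
`V = C (v^{1/c})` and `M = C (v^{1/c} ∧ u^{1/a})`: one has `C u = A^a`, `C v = V^c`,
`C (v^{a/c}) = V^a`, `C (v^{a/c} ∧ u) = M^a` and `C (v^{1-a/c}) = V^{c-a}`. After the substitutions
`t = ξ + a` and `t = c - ξ` the first and third integrals both become
`∫₀ᵃ A^{a-t} M^t V^{c-t} dt` (`gammaSl_eq`).

If `M = 0`, this integrand vanishes for `t > 0` (`integral_of_zero`). If `M = A V > 0`, it is the
constant `A^a V^c` (`integral_of_eq`). Otherwise monotonicity of `C` gives `A, V ≥ M > 0`, and the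
integrand is `A^a V^c exp (t L)` with `L = log M - log (A V) ≠ 0`, which integrates explicitly
(`integral_of_pos`). -/


open MeasureTheory Filter Set

noncomputable section

/-- The closed unit cube `[0,1]^d` in `ℝ^d`. -/
def unitBox (d : ℕ) : Set (Fin d → ℝ) := {u | ∀ j, u j ∈ Set.Icc (0:ℝ) 1}

/-- `C` is (the restriction to `[0,1]^d` of) the distribution function of a Borel probability
measure concentrated on `[0,1]^d` whose one-dimensional margins are uniform on `[0,1]`. -/
def IsCopula {d : ℕ} (C : (Fin d → ℝ) → ℝ) : Prop :=
  ∃ μ : Measure (Fin d → ℝ), IsProbabilityMeasure μ ∧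
    μ (unitBox d)ᶜ = 0 ∧
    (∀ u ∈ unitBox d, C u = (μ {x | ∀ j, x j ≤ u j}).toReal) ∧
    (∀ j : Fin d, ∀ t ∈ Set.Icc (0:ℝ) 1, (μ {x | x j ≤ t}).toReal = t)

/-- Extreme-value copula: max-stability. -/
def IsEVCopula {d : ℕ} (C : (Fin d → ℝ) → ℝ) : Prop :=
  IsCopula C ∧ ∀ s : ℝ, 0 < s → ∀ u ∈ unitBox d, (C fun j => u j ^ (1/s)) ^ s = C u

/-- The covariance kernel `γ(v,u,c,a)` of the sliding-blocks limit process. -/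
def gammaSl {d : ℕ} (C : (Fin d → ℝ) → ℝ) (v u : Fin d → ℝ) (c a : ℝ) : ℝ :=
  (∫ ξ in (-a)..0,
      C (fun j => u j ^ (1/a)) ^ (-ξ) *
      C (fun j => min (v j ^ (1/c)) (u j ^ (1/a))) ^ (ξ + a) *
      C (fun j => v j ^ (1/c)) ^ (c - ξ - a)) +
  (∫ _ξ in (0:ℝ)..(c - a),
      C (fun j => v j ^ (1/c)) ^ (c - a) *
      C (fun j => min (v j ^ (1/c)) (u j ^ (1/a))) ^ a) +
  (∫ ξ in (c - a)..c,
      C (fun j => v j ^ (1/c)) ^ ξ *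
      C (fun j => min (v j ^ (1/c)) (u j ^ (1/a))) ^ (c - ξ) *
      C (fun j => u j ^ (1/a)) ^ (ξ + a - c)) -
  (c + a) * C v * C u

/-- The covariance kernel `γ^D(u,v)` of the disjoint-blocks limit process. -/
def gammaD {d : ℕ} (C : (Fin d → ℝ) → ℝ) (u v : Fin d → ℝ) : ℝ :=
  C (fun j => min (u j) (v j)) - C u * C v

/-! ### Elementary properties of copulas -/

lemma IsCopula.mono {d : ℕ} {C : (Fin d → ℝ) → ℝ} (hC : IsCopula C) {u v : Fin d → ℝ}
    (hu : u ∈ unitBox d) (hv : v ∈ unitBox d) (h : ∀ j, u j ≤ v j) : C u ≤ C v := by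
  obtain ⟨μ, _, -, hμ, -⟩ := hC
  rw [hμ u hu, hμ v hv]
  exact ENNReal.toReal_mono (measure_ne_top _ _)
    (measure_mono fun x hx j => (hx j).trans (h j))

lemma IsCopula.nonneg {d : ℕ} {C : (Fin d → ℝ) → ℝ} (hC : IsCopula C) {u : Fin d → ℝ}
    (hu : u ∈ unitBox d) : 0 ≤ C u := by
  obtain ⟨μ, _, -, hμ, -⟩ := hC
  rw [hμ u hu]
  exact ENNReal.toReal_nonneg

lemma IsCopula.one {d : ℕ} {C : (Fin d → ℝ) → ℝ} (hC : IsCopula C) : C (fun _ => 1) = 1 := by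
  obtain ⟨μ, _, h0, hμ, -⟩ := hC
  rw [hμ _ fun j => ⟨zero_le_one, le_rfl⟩]
  have h : μ {x | ∀ j, x j ≤ 1} = 1 := by
    rw [← prob_compl_eq_zero_iff₀]
    · exact measure_mono_null (compl_subset_compl.2 fun x hx j => (hx j).2) h0
    · refine MeasurableSet.nullMeasurableSet ?_
      rw [ofPred_forall]
      exact MeasurableSet.iInter fun j => measurableSet_le (measurable_pi_apply j) measurable_const
  rw [h, ENNReal.toReal_one]

lemma rpow_mem_unitBox {d : ℕ} {u : Fin d → ℝ} (hu : u ∈ unitBox d) {r : ℝ} (hr : 0 ≤ r) :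
    (fun j => u j ^ r) ∈ unitBox d := fun j =>
  ⟨Real.rpow_nonneg (hu j).1 _, Real.rpow_le_one (hu j).1 (hu j).2 hr⟩

lemma min_mem_unitBox {d : ℕ} {u v : Fin d → ℝ} (hu : u ∈ unitBox d) (hv : v ∈ unitBox d) :
    (fun j => min (u j) (v j)) ∈ unitBox d := fun j =>
  ⟨le_min (hu j).1 (hv j).1, (min_le_left _ _).trans (hu j).2⟩

/-! ### The values of `C` in terms of `A`, `M` and `V` -/

lemma IsEVCopula.rpow_div {d : ℕ} {C : (Fin d → ℝ) → ℝ} (hC : IsEVCopula C)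
    {v : Fin d → ℝ} (hv : v ∈ unitBox d) {b c : ℝ} (hb : 0 < b) (hc : 0 < c) :
    C (fun j => v j ^ (b / c)) = C (fun j => v j ^ (1 / c)) ^ b := by
  rw [← hC.2 b hb _ (rpow_mem_unitBox hv (by positivity : 0 ≤ b / c))]
  congr 2
  funext j
  rw [← Real.rpow_mul (hv j).1]
  congr 1
  field_simp

lemma IsEVCopula.min_rpow {d : ℕ} {C : (Fin d → ℝ) → ℝ} (hC : IsEVCopula C)
    {u v : Fin d → ℝ} (hu : u ∈ unitBox d) (hv : v ∈ unitBox d) {a c : ℝ} (ha : 0 < a)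
    (hc : 0 < c) :
    C (fun j => min (v j ^ (a / c)) (u j)) =
      C (fun j => min (v j ^ (1 / c)) (u j ^ (1 / a))) ^ a := by
  have hva := rpow_mem_unitBox hv (by positivity : 0 ≤ a / c)
  rw [← hC.2 a ha _ (min_mem_unitBox hva hu)]
  congr 2
  funext j
  have hmono : MonotoneOn (fun x : ℝ => x ^ (1 / a)) (Ici 0) :=
    Real.monotoneOn_rpow_Ici_of_exponent_nonneg (by positivity)
  have h := hmono.map_min (hva j).1 (hu j).1
  simp only at h
  rw [h, ← Real.rpow_mul (hv j).1]
  congr 2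
  field_simp

/-- At `a = c` both sides equal `1`; max-stability alone does not cover this exponent `0`. -/
lemma IsEVCopula.rpow_one_sub {d : ℕ} {C : (Fin d → ℝ) → ℝ} (hC : IsEVCopula C)
    {v : Fin d → ℝ} (hv : v ∈ unitBox d) {a c : ℝ} (ha : 0 < a) (hac : a ≤ c) :
    C (fun j => v j ^ (1 - a / c)) = C (fun j => v j ^ (1 / c)) ^ (c - a) := by
  have hc := ha.trans_le hac
  rcases hac.eq_or_lt with rfl | h
  · simp [div_self hc.ne', hC.1.one]
  · rw [← hC.rpow_div hv (sub_pos.2 h) hc, sub_div, div_self hc.ne']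

/-! ### The kernel as a one-variable integral -/

lemma gammaSl_eq {d : ℕ} (C : (Fin d → ℝ) → ℝ) (v u : Fin d → ℝ) (c a : ℝ) {A M V : ℝ}
    (hA : C (fun j => u j ^ (1 / a)) = A)
    (hM : C (fun j => min (v j ^ (1 / c)) (u j ^ (1 / a))) = M)
    (hV : C (fun j => v j ^ (1 / c)) = V) :
    gammaSl C v u c a = 2 * (∫ t in (0 : ℝ)..a, A ^ (a - t) * M ^ t * V ^ (c - t)) +
      (c - a) * (V ^ (c - a) * M ^ a) - (c + a) * C v * C u := by
  have h1 : (∫ ξ in (-a)..0, A ^ (-ξ) * M ^ (ξ + a) * V ^ (c - ξ - a)) =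
      ∫ t in (0 : ℝ)..a, A ^ (a - t) * M ^ t * V ^ (c - t) := by
    have h := intervalIntegral.integral_comp_add_right (a := -a) (b := 0)
      (fun t => A ^ (a - t) * M ^ t * V ^ (c - t)) a
    rw [neg_add_cancel, zero_add] at h
    rw [← h]
    congr 1
    funext ξ
    rw [show a - (ξ + a) = -ξ by ring, show c - (ξ + a) = c - ξ - a by ring]
  have h3 : (∫ ξ in (c - a)..c, V ^ ξ * M ^ (c - ξ) * A ^ (ξ + a - c)) =
      ∫ t in (0 : ℝ)..a, A ^ (a - t) * M ^ t * V ^ (c - t) := by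
    have h := intervalIntegral.integral_comp_sub_left (a := c - a) (b := c)
      (fun t => A ^ (a - t) * M ^ t * V ^ (c - t)) c
    rw [sub_self, sub_sub_cancel] at h
    rw [← h]
    congr 1
    funext ξ
    rw [show a - (c - ξ) = ξ + a - c by ring, show c - (c - ξ) = ξ by ring]
    ring
  simp only [gammaSl, hA, hM, hV]
  rw [h1, h3, intervalIntegral.integral_const, smul_eq_mul]
  ring

/-- The integrand is nonzero at most at `t = 0`, where `0 ^ 0 = 1`. -/
lemma integral_of_zero {a : ℝ} (ha : 0 < a) (c A V : ℝ) :
    (∫ t in (0 : ℝ)..a, A ^ (a - t) * (0 : ℝ) ^ t * V ^ (c - t)) = 0 := by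
  refine intervalIntegral.integral_zero_ae (Eventually.of_forall fun t ht => ?_)
  rw [uIoc_of_le ha.le] at ht
  rw [Real.zero_rpow ht.1.ne']
  ring

lemma integrand_eq {a c t A M V : ℝ} (hA : 0 < A) (hM : 0 < M) (hV : 0 < V) :
    A ^ (a - t) * M ^ t * V ^ (c - t) =
      A ^ a * V ^ c * Real.exp (t * (Real.log M - Real.log (A * V))) := by
  rw [Real.log_mul hA.ne' hV.ne']
  simp only [Real.rpow_def_of_pos hA, Real.rpow_def_of_pos hM, Real.rpow_def_of_pos hV,
    ← Real.exp_add]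
  congr 1
  ring

lemma integral_of_eq {a c A V : ℝ} (hA : 0 < A) (hV : 0 < V) :
    (∫ t in (0 : ℝ)..a, A ^ (a - t) * (A * V) ^ t * V ^ (c - t)) = a * (A ^ a * V ^ c) := by
  simp only [integrand_eq hA (mul_pos hA hV) hV]
  simp [mul_left_comm]

lemma integral_of_pos {a c A M V : ℝ} (hA : 0 < A) (hM : 0 < M) (hV : 0 < V)
    (hne : M ≠ A * V) :
    (∫ t in (0 : ℝ)..a, A ^ (a - t) * M ^ t * V ^ (c - t)) =
      V ^ (c - a) * (M ^ a - V ^ a * A ^ a) / (Real.log M - Real.log (A * V)) := by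
  have hAV := mul_pos hA hV
  have hL : Real.log M - Real.log (A * V) ≠ 0 :=
    sub_ne_zero.2 fun h => hne (Real.log_injOn_pos hM hAV h)
  have hend := integrand_eq (a := a) (c := c) (t := a) hA hM hV
  rw [sub_self, Real.rpow_zero, one_mul] at hend
  have hVc : V ^ c = V ^ (c - a) * V ^ a := by rw [← Real.rpow_add hV, sub_add_cancel]
  simp only [integrand_eq hA hM hV]
  set L := Real.log M - Real.log (A * V)
  rw [intervalIntegral.integral_const_mul, intervalIntegral.integral_comp_mul_right _ hL,
    integral_exp, zero_mul, Real.exp_zero, smul_eq_mul]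
  rw [eq_div_iff hL]
  have : A ^ a * V ^ c * (L⁻¹ * (Real.exp (a * L) - 1)) * L =
      A ^ a * V ^ c * Real.exp (a * L) - A ^ a * V ^ c := by
    field_simp
  rw [this, ← hend, hVc]
  ring

/-- closed-form expression for the covariance kernel `γ(v,u,c,a)`. -/
theorem statement8 {d : ℕ} (C : (Fin d → ℝ) → ℝ) (hC : IsEVCopula C)
    (u v : Fin d → ℝ) (hu : u ∈ unitBox d) (hv : v ∈ unitBox d)
    (a c : ℝ) (ha : 0 < a) (hac : a ≤ c) :
    ((C fun j => min (v j ^ (a/c)) (u j)) = (C fun j => v j ^ (a/c)) * C u →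
      gammaSl C v u c a = 0) ∧
    ((C fun j => min (v j ^ (a/c)) (u j)) = 0 →
      (C fun j => v j ^ (a/c)) * C u ≠ 0 →
      gammaSl C v u c a = -(c + a) * C v * C u) ∧
    (0 < (C fun j => min (v j ^ (a/c)) (u j)) →
      (C fun j => min (v j ^ (a/c)) (u j)) ≠ (C fun j => v j ^ (a/c)) * C u →
      gammaSl C v u c a =
        (C fun j => v j ^ (1 - a/c)) *
          (2 * a * ((C fun j => min (v j ^ (a/c)) (u j)) - (C fun j => v j ^ (a/c)) * C u) /
              (Real.log (C fun j => min (v j ^ (a/c)) (u j)) -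
                Real.log ((C fun j => v j ^ (a/c)) * C u)) +
            (c - a) * (C fun j => min (v j ^ (a/c)) (u j)) -
            (c + a) * ((C fun j => v j ^ (a/c)) * C u))) := by
  have hc := ha.trans_le hac
  have hAm := rpow_mem_unitBox hu (by positivity : 0 ≤ 1 / a)
  have hVm := rpow_mem_unitBox hv (by positivity : 0 ≤ 1 / c)
  have hMm := min_mem_unitBox hVm hAm
  have eU : C u = C (fun j => u j ^ (1 / a)) ^ a := (hC.2 a ha u hu).symm
  have eV : C v = C (fun j => v j ^ (1 / c)) ^ c := (hC.2 c hc v hv).symm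
  have hA0 := hC.1.nonneg hAm
  have hV0 := hC.1.nonneg hVm
  have hM0 := hC.1.nonneg hMm
  have hMA := hC.1.mono hMm hAm fun j => min_le_right _ _
  have hMV := hC.1.mono hMm hVm fun j => min_le_left _ _
  rw [gammaSl_eq C v u c a rfl rfl rfl, hC.min_rpow hu hv ha hc, hC.rpow_div hv ha hc,
    hC.rpow_one_sub hv ha hac, eU, eV]
  generalize C (fun j => u j ^ (1 / a)) = A at *
  generalize C (fun j => v j ^ (1 / c)) = V at *
  generalize C (fun j => min (v j ^ (1 / c)) (u j ^ (1 / a))) = M at *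
  have hpow : V ^ c = V ^ (c - a) * V ^ a := by
    rw [← Real.rpow_add_of_nonneg hV0 (sub_nonneg.2 hac) ha.le, sub_add_cancel]
  have hmul : V ^ a * A ^ a = (A * V) ^ a := by rw [Real.mul_rpow hA0 hV0, mul_comm]
  refine ⟨fun h => ?_, fun h _ => ?_, fun h hne => ?_⟩
  · rcases hM0.eq_or_lt with rfl | hM
    · rw [integral_of_zero ha, h, hpow]
      rw [Real.zero_rpow ha.ne'] at h
      linear_combination (-2 * a * V ^ (c - a)) * h.symm
    · have hMe : M = A * V :=
        (Real.rpow_left_inj hM0 (mul_nonneg hA0 hV0) ha.ne').1 (h.trans hmul)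
      rw [h, hMe, integral_of_eq (hM.trans_le hMA) (hM.trans_le hMV), hpow]
      ring
  · obtain rfl : M = 0 := (Real.rpow_eq_zero hM0 ha.ne').1 h
    rw [integral_of_zero ha, h]
    ring
  · have hM : 0 < M := hM0.lt_of_ne fun h0 => by
      rw [← h0, Real.zero_rpow ha.ne'] at h
      exact h.false
    have hA := hM.trans_le hMA
    have hV := hM.trans_le hMV
    have hne' : M ≠ A * V := fun h0 => hne (by rw [hmul, h0])
    have hL : Real.log M - Real.log (A * V) ≠ 0 :=
      sub_ne_zero.2 fun h => hne' (Real.log_injOn_pos hM (mul_pos hA hV) h)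
    rw [integral_of_pos hA hM hV hne', hpow, congrArg Real.log hmul, Real.log_rpow hM,
      Real.log_rpow (mul_pos hA hV), ← mul_sub]
    generalize Real.log M - Real.log (A * V) = L at *
    field_simp
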